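/- Let p ≥ 1 and let f : ℝ^p → ℝ^p be either a piecewise linear function or a threshold affine function, with associated matrices Φ⁽¹⁾, …, Φ⁽ᴸ⁾ ∈ ℝ^{p×p}. Then f is a bijection of ℝ^p and both f and f⁻¹ are Lipschitz continuous, if and only if the determinantal condition holds: sgn det Φ⁽ˡ⁾ = sgn det Φ⁽¹⁾ ≠ 0 for all ℓ ∈ {1, …, L}. -/

import Mathlib

open MeasureTheory Matrix

noncomputable section

abbrev E (n : ℕ) : Type := EuclideanSpace ℝ (Fin n)

def mulVecE {m n : ℕ} (A : Matrix (Fin m) (Fin n) ℝ) (x : E n) : E m := WithLp.toLp 2 (A.mulVec x)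

/-- A (continuous) piecewise affine function `f` with regimes `Z`, intercepts `φ`
and coefficient matrices `Φ`: the regimes are convex, nonempty, and partition `ℝ^p`,
and `f z = φ ℓ + Φ ℓ z` on the regime `Z ℓ`. -/
def IsPiecewiseAffine {p L : ℕ} (f : E p → E p) (Z : Fin L → Set (E p))
    (φ : Fin L → E p) (Φ : Fin L → Matrix (Fin p) (Fin p) ℝ) : Prop :=
  Continuous f ∧ (∀ ℓ, Convex ℝ (Z ℓ)) ∧ (∀ ℓ, (Z ℓ).Nonempty) ∧
    (∀ z : E p, ∃! ℓ, z ∈ Z ℓ) ∧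
    ∀ ℓ, ∀ z ∈ Z ℓ, f z = φ ℓ + mulVecE (Φ ℓ) z

/-- The cone `C_I` determined by the vectors `a` and the index set `I`. -/
def coneOf {p : ℕ} (a : Fin p → E p) (I : Set (Fin p)) : Set (E p) :=
  {z | (∀ i ∈ I, 0 ≤ ∑ j, a i j * z j) ∧ (∀ i ∉ I, (∑ j, a i j * z j) < 0)}

/-- A (continuous) piecewise linear function: piecewise affine with zero intercepts, where each
regime is a union of cones `C_I` determined by a fixed basis `a₁, …, a_p` of `ℝ^p`. -/
def IsPiecewiseLinear {p L : ℕ} (f : E p → E p) (Z : Fin L → Set (E p))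
    (φ : Fin L → E p) (Φ : Fin L → Matrix (Fin p) (Fin p) ℝ) : Prop :=
  IsPiecewiseAffine f Z φ Φ ∧ (∀ ℓ, φ ℓ = 0) ∧
    ∃ a : Fin p → E p, LinearIndependent ℝ a ∧ Submodule.span ℝ (Set.range a) = ⊤ ∧
      ∀ ℓ, ∃ S : Set (Set (Fin p)), Z ℓ = ⋃ I ∈ S, coneOf a I

/-- A (continuous) threshold affine function: piecewise affine, whose regimes are the bands
`{z : τ_{ℓ-1} < aᵀz ≤ τ_ℓ}` for some `a ≠ 0` and thresholds `-∞ = τ₀ < τ₁ < ⋯ < τ_L = +∞`. -/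
def IsThresholdAffine {p L : ℕ} (f : E p → E p) (Z : Fin L → Set (E p))
    (φ : Fin L → E p) (Φ : Fin L → Matrix (Fin p) (Fin p) ℝ) : Prop :=
  IsPiecewiseAffine f Z φ Φ ∧
    ∃ a : E p, a ≠ 0 ∧ ∃ τ : Fin (L + 1) → EReal, StrictMono τ ∧
      τ 0 = ⊥ ∧ τ (Fin.last L) = ⊤ ∧
      ∀ ℓ : Fin L, Z ℓ =
        {z : E p | τ ℓ.castSucc < ((∑ j, a j * z j : ℝ) : EReal) ∧
          ((∑ j, a j * z j : ℝ) : EReal) ≤ τ ℓ.succ}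

/-!
By the mean value inequality, a continuous selection `f` of finitely many affine maps satisfies
`f x - f y = M (x - y)` with `M` in the convex hull of their linear parts. If the hull consists of
invertible operators, then by compactness `f` is bi-Lipschitz onto its image, and it is onto: at a
point nearest to the target, a functional separating the origin from the adjoint images of the
residual would give a direction of descent.

The determinant is multilinear in the columns, so a sign shared by all linear parts persists on
the hull as soon as the family of linear parts is closed under exchanging columns. This holds for
cones over a basis, where a column depends on the sign of one coordinate only, and for
parallel bands, where the linear parts agree on a hyperplane.

Conversely, let `A` and `B` be the linear parts on the two sides of a facet. A vector in the kernel
of a convex combination of `A` and `B` yields two points, one on either side, with the same image;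
so if `f` is injective, the determinant does not vanish on the segment from `A` to `B`.
-/

open Set Filter Topology

section AffineSelection

variable {ι V W : Type*} [NormedAddCommGroup V] [NormedSpace ℝ V]
  [NormedAddCommGroup W] [NormedSpace ℝ W]

/-- A continuous selection of the affine maps `x ↦ c i + T i x`: piecewise affinity without
any reference to the regimes. -/
structure IsAffineSelection (f : V → W) (c : ι → W) (T : ι → V →L[ℝ] W) : Prop where
  continuous : Continuous f
  exists_eq : ∀ x, ∃ i, f x = c i + T i x

namespace IsAffineSelection

variable [Finite ι] {f : V → W} {c : ι → W} {T : ι → V →L[ℝ] W}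

lemma exists_frequently_eq (hf : IsAffineSelection f c T) (x d : V) (t : ℝ) :
    ∃ i, f (x + t • d) = c i + T i (x + t • d) ∧
      ∃ᶠ s in 𝓝[>] t, f (x + s • d) = c i + T i (x + s • d) := by
  have hcont := hf.continuous
  obtain ⟨i, hi⟩ : ∃ i, ∃ᶠ s in 𝓝[>] t, f (x + s • d) = c i + T i (x + s • d) := by
    by_contra! hnone
    obtain ⟨s, hs⟩ := (eventually_all.2 hnone).exists
    obtain ⟨i, hi⟩ := hf.exists_eq (x + s • d)
    exact hs i hi
  have hclosed : IsClosed {s : ℝ | f (x + s • d) = c i + T i (x + s • d)} :=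
    isClosed_eq (by fun_prop) (by fun_prop)
  exact ⟨i, hclosed.mem_of_frequently_of_tendsto hi nhdsWithin_le_nhds, hi⟩

lemma dual_apply_sub_le (hf : IsAffineSelection f c T) (ψ : StrongDual ℝ W) (x d : V) {u : ℝ}
    (hu : ∀ i, ψ (T i d) ≤ u) : ψ (f (x + d) - f x) ≤ u := by
  have hcont := hf.continuous
  set g : ℝ → ℝ := fun t ↦ ψ (f (x + t • d))
  have hslope : ∀ t ∈ Ico (0 : ℝ) 1, ∀ r, u < r → ∃ᶠ s in 𝓝[>] t, slope g t s < r := by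
    intro t _ r hr
    obtain ⟨i, hit, hi⟩ := hf.exists_frequently_eq x d t
    refine (hi.and_eventually self_mem_nhdsWithin).mono fun s ⟨his, hts⟩ ↦ ?_
    have hne : s - t ≠ 0 := (sub_pos.2 hts).ne'
    have hg : g s - g t = (s - t) * ψ (T i d) := by
      simp only [g, his, hit, map_add, map_smul, smul_eq_mul]
      ring
    rw [slope_def_field, hg, mul_div_cancel_left₀ _ hne]
    exact (hu i).trans_lt hr
  have hbound := image_le_of_liminf_slope_right_le_deriv_boundary
    (f := g) (B := fun t ↦ g 0 + u * t) (B' := fun _ ↦ u) (by fun_prop) (by simp) (by fun_prop)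
    (fun t _ ↦ by simpa using (((hasDerivAt_id t).const_mul u).const_add (g 0)).hasDerivWithinAt)
    hslope (right_mem_Icc.2 zero_le_one)
  simp only [g, one_smul, zero_smul, add_zero, mul_one] at hbound
  rwa [map_sub, sub_le_iff_le_add']

theorem exists_mem_convexHull_sub_eq (hf : IsAffineSelection f c T) (x y : V) :
    ∃ M ∈ convexHull ℝ (range T), f x - f y = M (x - y) := by
  set C : Set W := convexHull ℝ (range fun i ↦ T i (x - y)) with hC
  have himage : (fun M : V →L[ℝ] W ↦ M (x - y)) '' convexHull ℝ (range T) = C := by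
    rw [hC, range_comp' (fun M : V →L[ℝ] W ↦ M (x - y)) T]
    exact LinearMap.image_convexHull
      (ContinuousLinearMap.apply ℝ W (x - y)).toLinearMap (range T)
  suffices f x - f y ∈ C by
    obtain ⟨M, hM, hMeq⟩ := himage ▸ this
    exact ⟨M, hM, hMeq.symm⟩
  by_contra hnot
  obtain ⟨ψ, u, hψ, hu⟩ := geometric_hahn_banach_closed_point (convex_convexHull ℝ _)
    (Set.Finite.isClosed_convexHull ℝ (finite_range fun i ↦ T i (x - y))) hnot
  have hle := hf.dual_apply_sub_le ψ y (x - y) (u := u)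
    fun i ↦ (hψ _ (subset_convexHull ℝ _ (mem_range_self i))).le
  rw [add_sub_cancel] at hle
  exact hle.not_gt hu

theorem exists_lipschitzWith (hf : IsAffineSelection f c T) :
    ∃ C : NNReal, LipschitzWith C f := by
  obtain ⟨C, -, hC⟩ :=
    (isBounded_convexHull.2 (finite_range T).isBounded).exists_pos_norm_le
  refine ⟨C.toNNReal, LipschitzWith.of_dist_le' fun x y ↦ ?_⟩
  obtain ⟨M, hM, hMeq⟩ := hf.exists_mem_convexHull_sub_eq x y
  rw [dist_eq_norm, dist_eq_norm, hMeq]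
  exact M.le_of_opNorm_le (hC M hM) _

end IsAffineSelection

theorem IsAffineSelection.exists_antilipschitzWith [Finite ι] [CompleteSpace V] {f : V → V}
    {c : ι → V} {T : ι → V →L[ℝ] V} (hf : IsAffineSelection f c T)
    (hT : ∀ M ∈ convexHull ℝ (range T), IsUnit M) :
    ∃ C : NNReal, AntilipschitzWith C f := by
  have hinv : ContinuousOn Ring.inverse (convexHull ℝ (range T)) := fun M hM ↦ by
    obtain ⟨u, rfl⟩ := hT M hM
    exact (NormedRing.inverse_continuousAt u).continuousWithinAt
  obtain ⟨C, hC⟩ :=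
    ((finite_range T).isCompact_convexHull ℝ).exists_bound_of_continuousOn hinv
  refine ⟨C.toNNReal, AntilipschitzWith.of_le_mul_dist fun x y ↦ ?_⟩
  obtain ⟨M, hM, hMeq⟩ := hf.exists_mem_convexHull_sub_eq x y
  have hcancel : x - y = Ring.inverse M (f x - f y) := by
    rw [hMeq, ← mul_apply_eq_comp, Ring.inverse_mul_cancel M (hT M hM), one_apply_eq_self]
  rw [dist_eq_norm, dist_eq_norm]
  calc ‖x - y‖ = ‖Ring.inverse M (f x - f y)‖ := by rw [← hcancel]
    _ ≤ C.toNNReal * ‖f x - f y‖ :=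
      (Ring.inverse M).le_of_opNorm_le ((hC M hM).trans (Real.le_coe_toNNReal C)) _

end AffineSelection

section Surjectivity

variable {ι V W : Type*} [Finite ι] [NormedAddCommGroup V] [InnerProductSpace ℝ V]

theorem IsAffineSelection.exists_norm_sub_lt [NormedAddCommGroup W]
    [InnerProductSpace ℝ W] {f : V → W} {c : ι → W} {T : ι → V →L[ℝ] W}
    (hf : IsAffineSelection f c T) {x v : V} {y : W} {δ : ℝ} (hδ : 0 < δ)
    (hv : ∀ M ∈ convexHull ℝ (range T), δ ≤ inner ℝ (y - f x) (M v)) :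
    ∃ x', ‖y - f x'‖ < ‖y - f x‖ := by
  obtain ⟨K, hK, hbound⟩ :=
    (isBounded_convexHull.2 (finite_range T).isBounded).exists_pos_norm_le
  set R := K * ‖v‖ + 1
  have hR : 0 < R := by positivity
  set t := δ / R ^ 2 with ht
  obtain ⟨M, hM, hMeq⟩ := hf.exists_mem_convexHull_sub_eq (x + t • v) x
  have hMv : ‖M v‖ ≤ R :=
    (M.le_of_opNorm_le (hbound M hM) v).trans (le_add_of_nonneg_right zero_le_one)
  have hresidual : y - f (x + t • v) = (y - f x) - t • M v := by
    rw [add_sub_cancel_left, map_smul] at hMeq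
    rw [← hMeq]
    abel
  refine ⟨x + t • v, (sq_lt_sq₀ (norm_nonneg _) (norm_nonneg _)).1 ?_⟩
  have htpos : 0 < t := by positivity
  calc ‖y - f (x + t • v)‖ ^ 2
      = ‖y - f x‖ ^ 2 - 2 * (t * inner ℝ (y - f x) (M v)) + t ^ 2 * ‖M v‖ ^ 2 := by
        rw [hresidual, norm_sub_sq_real, inner_smul_right, norm_smul, mul_pow, Real.norm_eq_abs,
          sq_abs]
    _ ≤ ‖y - f x‖ ^ 2 - 2 * (t * δ) + t ^ 2 * R ^ 2 := by
        gcongr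
        exact hv M hM
    _ = ‖y - f x‖ ^ 2 - t * δ := by
        rw [ht]
        field_simp
        ring
    _ < ‖y - f x‖ ^ 2 := sub_lt_self _ (mul_pos htpos hδ)

variable [FiniteDimensional ℝ V] {f : V → V} {c : ι → V} {T : ι → V →L[ℝ] V}

lemma exists_pos_le_inner_of_isUnit (hT : ∀ M ∈ convexHull ℝ (range T), IsUnit M) {r : V}
    (hr : r ≠ 0) : ∃ v : V, ∃ δ > 0, ∀ M ∈ convexHull ℝ (range T), δ ≤ inner ℝ r (M v) := by
  set D : Set V := (fun M : V →L[ℝ] V ↦ M.adjoint r) '' convexHull ℝ (range T) with hD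
  have hlin : IsLinearMap ℝ fun M : V →L[ℝ] V ↦ M.adjoint r :=
    ⟨fun M N ↦ by simp, fun a M ↦ by simp⟩
  have hclosed : IsClosed D := by
    rw [hD, hlin.image_convexHull]
    exact ((finite_range T).image _).isClosed_convexHull ℝ
  have hzero : (0 : V) ∉ D := by
    rintro ⟨M, hM, hM0 : M.adjoint r = 0⟩
    obtain ⟨w, hw⟩ := (ContinuousLinearMap.isUnit_iff_bijective.1 (hT M hM)).2 r
    apply hr
    rw [← inner_self_eq_zero (𝕜 := ℝ)]
    nth_rw 2 [← hw]
    rw [← M.adjoint_inner_left, hM0, inner_zero_left]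
  obtain ⟨ψ, δ, hδ, hψ⟩ := geometric_hahn_banach_point_closed
    ((convex_convexHull ℝ _).is_linear_image hlin) hclosed hzero
  refine ⟨(InnerProductSpace.toDual ℝ V).symm ψ, δ, by simpa using hδ, fun M hM ↦ ?_⟩
  rw [← M.adjoint_inner_left, real_inner_comm, InnerProductSpace.toDual_symm_apply]
  exact (hψ _ ⟨M, hM, rfl⟩).le

theorem IsAffineSelection.surjective (hf : IsAffineSelection f c T)
    (hT : ∀ M ∈ convexHull ℝ (range T), IsUnit M) : Function.Surjective f := by
  intro y
  obtain ⟨C, hC⟩ := hf.exists_antilipschitzWith hT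
  have hcoercive : Tendsto (fun x ↦ ‖y - f x‖) (cocompact V) atTop := by
    simp_rw [← dist_eq_norm, dist_comm y]
    rw [← Metric.cobounded_eq_cocompact]
    exact (Metric.tendsto_dist_right_cobounded_atTop y).comp hC.tendsto_cobounded
  have hcont := hf.continuous
  obtain ⟨x, hmin⟩ := Continuous.exists_forall_le (by fun_prop) hcoercive
  refine ⟨x, by_contra fun hne ↦ ?_⟩
  obtain ⟨v, δ, hδ, hv⟩ := exists_pos_le_inner_of_isUnit hT (sub_ne_zero.2 (Ne.symm hne))
  obtain ⟨x', hx'⟩ := hf.exists_norm_sub_lt hδ hv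
  exact (hmin x').not_gt hx'

theorem IsAffineSelection.bijective_and_lipschitz (hf : IsAffineSelection f c T)
    (hT : ∀ M ∈ convexHull ℝ (range T), IsUnit M) :
    Function.Bijective f ∧ (∃ C : NNReal, LipschitzWith C f) ∧
      ∃ C : NNReal, LipschitzWith C (Function.invFun f) := by
  obtain ⟨C, hC⟩ := hf.exists_antilipschitzWith hT
  have hsurj := hf.surjective hT
  exact ⟨⟨hC.injective, hsurj⟩, hf.exists_lipschitzWith,
    C, hC.to_rightInverse (Function.rightInverse_invFun hsurj)⟩

end Surjectivity

section Determinant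

lemma multilinearMap_apply_mem_of_mem_convexHull {κ W : Type*} {V : κ → Type*} [Finite κ]
    [∀ k, AddCommGroup (V k)] [∀ k, Module ℝ (V k)] [AddCommGroup W] [Module ℝ W]
    (G : MultilinearMap ℝ V W) {S : ∀ k, Set (V k)} {C : Set W} (hC : Convex ℝ C)
    (hS : ∀ v, (∀ k, v k ∈ S k) → G v ∈ C) {v : ∀ k, V k}
    (hv : ∀ k, v k ∈ convexHull ℝ (S k)) : G v ∈ C := by
  classical
  have := Fintype.ofFinite κ
  suffices ∀ s : Finset κ, ∀ w, (∀ k ∈ s, w k ∈ convexHull ℝ (S k)) → (∀ k ∉ s, w k ∈ S k) →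
      G w ∈ C from this Finset.univ v (fun k _ ↦ hv k) (by simp)
  intro s
  induction s using Finset.induction_on with
  | empty => exact fun w _ hw ↦ hS w fun k ↦ hw k (Finset.notMem_empty k)
  | insert a s ha ih =>
    intro w hin hout
    have hvertex : S a ⊆ G.toLinearMap w a ⁻¹' C := fun x hx ↦ by
      refine ih _ (fun k hk ↦ ?_) fun k hk ↦ ?_
      · rw [Function.update_of_ne (ne_of_mem_of_not_mem hk ha)]
        exact hin k (Finset.mem_insert_of_mem hk)
      · rcases eq_or_ne k a with rfl | hka
        · rwa [Function.update_self]
        · rw [Function.update_of_ne hka]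
          exact hout k (by simp [hka, hk])
    have := convexHull_min hvertex (hC.linear_preimage _) (hin a (Finset.mem_insert_self a s))
    rwa [mem_preimage, MultilinearMap.toLinearMap_apply, Function.update_eq_self] at this

variable {ι V : Type*} [NormedAddCommGroup V] [NormedSpace ℝ V]

/-- In some basis, every operator assembled column by column from members of the family `T` again
belongs to the family. -/
def IsColumnwiseClosed (T : ι → V →L[ℝ] V) : Prop :=
  ∃ (n : ℕ) (b : Module.Basis (Fin n) ℝ V), ∀ σ : Fin n → ι, ∃ i, ∀ k, T i (b k) = T (σ k) (b k)

theorem IsColumnwiseClosed.det_mul_pos {T : ι → V →L[ℝ] V} (hT : IsColumnwiseClosed T) {d : ℝ}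
    (hd : ∀ i, 0 < (T i).det * d) {M : V →L[ℝ] V} (hM : M ∈ convexHull ℝ (range T)) :
    0 < M.det * d := by
  obtain ⟨n, b, hb⟩ := hT
  have hdet (N : V →L[ℝ] V) : b.det (fun k ↦ N (b k)) = N.det :=
    (b.det_comp N.toLinearMap b).trans (by rw [b.det_self, mul_one])
  have hconvex : Convex ℝ {y : ℝ | 0 < y * d} :=
    (convex_Ioi 0).linear_preimage (LinearMap.mulRight ℝ d)
  have hcolumn (k : Fin n) : M (b k) ∈ convexHull ℝ (range fun i ↦ T i (b k)) := by
    rw [range_comp' (fun N : V →L[ℝ] V ↦ N (b k)) T]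
    exact (LinearMap.image_convexHull
      (ContinuousLinearMap.apply ℝ V (b k)).toLinearMap (range T)).subset ⟨M, hM, rfl⟩
  suffices b.det.toMultilinearMap (fun k ↦ M (b k)) ∈ {y : ℝ | 0 < y * d} by
    rwa [← hdet M]
  refine multilinearMap_apply_mem_of_mem_convexHull _ hconvex (fun v hv ↦ ?_) hcolumn
  choose σ hσ using hv
  obtain ⟨i, hi⟩ := hb σ
  have hv : v = fun k ↦ T i (b k) := funext fun k ↦ by rw [hi, ← hσ]
  have := hd i
  rwa [← hdet, ← hv] at this

lemma isUnit_of_det_ne_zero [FiniteDimensional ℝ V] {M : V →L[ℝ] V} (hM : M.det ≠ 0) : IsUnit M :=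
  ⟨(M.toContinuousLinearEquivOfDetNeZero hM).toUnit, rfl⟩

end Determinant

section Facet

variable {V W : Type*} [NormedAddCommGroup V] [NormedSpace ℝ V]
  [NormedAddCommGroup W] [NormedSpace ℝ W]

lemma tendsto_smul_nhdsGT_zero (u : V) : Tendsto (fun ε : ℝ ↦ ε • u) (𝓝[>] 0) (𝓝 0) := by
  have : Continuous fun ε : ℝ ↦ ε • u := by fun_prop
  exact (this.tendsto' 0 0 (zero_smul ℝ u)).mono_left nhdsWithin_le_nhds

lemma mul_pos_of_forall_mem_uIcc_ne_zero {g : ℝ → ℝ} {s t : ℝ} (hg : ContinuousOn g (uIcc s t))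
    (hne : ∀ r ∈ uIcc s t, g r ≠ 0) : 0 < g s * g t := by
  by_contra! hle
  obtain ⟨r, hr, hr0⟩ := intermediate_value_uIcc hg
    (mem_uIcc.2 <| (mul_nonpos_iff.1 hle).symm.imp id And.symm : (0 : ℝ) ∈ uIcc (g s) (g t))
  exact hne r hr hr0

lemma eq_zero_of_injective_of_smul_add_smul_eq_zero {f : V → W} (hf : Function.Injective f)
    {z : V} {α : V →L[ℝ] ℝ} {A B : V →L[ℝ] W}
    (hA : ∀ᶠ u in 𝓝 0, 0 ≤ α u → f (z + u) = f z + A u)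
    (hB : ∀ᶠ u in 𝓝 0, α u ≤ 0 → f (z + u) = f z + B u) {s t : ℝ} (hs : 0 ≤ s) (ht : 0 ≤ t)
    (hst : s + t = 1) {u : V} (hu : s • A u + t • B u = 0) : u = 0 := by
  wlog hα : 0 ≤ α u generalizing u
  · refine neg_eq_zero.1 (this (u := -u) ?_ ?_)
    · rw [map_neg, map_neg, smul_neg, smul_neg, ← neg_add, hu, neg_zero]
    · rw [map_neg]
      exact (neg_pos.2 (not_le.1 hα)).le
  have hεA := (tendsto_smul_nhdsGT_zero (s • u)).eventually hA
  have hεB := (tendsto_smul_nhdsGT_zero (-(t • u))).eventually hB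
  obtain ⟨ε, ⟨hA, hB⟩, hε : 0 < ε⟩ := ((hεA.and hεB).and self_mem_nhdsWithin).exists
  have hAα : 0 ≤ α (ε • s • u) := by
    simp only [map_smul, smul_eq_mul]
    positivity
  have hBα : α (ε • -(t • u)) ≤ 0 := by
    simp only [map_smul, map_neg, smul_eq_mul, mul_neg, neg_nonpos]
    positivity
  have himage : f (z + ε • s • u) = f (z + ε • -(t • u)) := by
    rw [hA hAα, hB hBα]
    simp only [map_smul, map_neg, eq_neg_of_add_eq_zero_left hu]
  have hpoint := smul_right_injective V hε.ne' (add_left_cancel (hf himage))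
  calc u = s • u - -(t • u) := by rw [sub_neg_eq_add, ← add_smul, hst, one_smul]
    _ = 0 := sub_eq_zero.2 hpoint

theorem det_mul_det_pos_of_injective [FiniteDimensional ℝ V] {f : V → V}
    (hf : Function.Injective f) {z : V} {α : V →L[ℝ] ℝ} {A B : V →L[ℝ] V}
    (hA : ∀ᶠ u in 𝓝 0, 0 ≤ α u → f (z + u) = f z + A u)
    (hB : ∀ᶠ u in 𝓝 0, α u ≤ 0 → f (z + u) = f z + B u) : 0 < A.det * B.det := by
  have hne : ∀ t ∈ uIcc (1 : ℝ) 0, (t • A + (1 - t) • B).det ≠ 0 := by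
    intro t ht hdet
    rw [uIcc_of_ge zero_le_one] at ht
    obtain ⟨u, hu, hu0⟩ :=
      Submodule.exists_mem_ne_zero_of_ne_bot (LinearMap.det_eq_zero_iff_ker_ne_bot.1 hdet)
    exact hu0 (eq_zero_of_injective_of_smul_add_smul_eq_zero hf hA hB ht.1 (sub_nonneg.2 ht.2)
      (add_sub_cancel t 1) hu)
  have hcont : Continuous fun t : ℝ ↦ (t • A + (1 - t) • B).det :=
    ContinuousLinearMap.continuous_det.comp (by fun_prop)
  simpa using mul_pos_of_forall_mem_uIcc_ne_zero hcont.continuousOn hne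

lemma eventually_mem_of_isClosed {α : V →L[ℝ] ℝ} (hα : α ≠ 0) {P : Set V} (hP : IsClosed P) {z : V}
    (h : ∀ᶠ x in 𝓝 z, α z < α x → x ∈ P) : ∀ᶠ x in 𝓝 z, α z ≤ α x → x ∈ P := by
  filter_upwards [eventually_eventually_nhds.2 h] with x hx hzx
  have hclosure : x ∈ closure (α ⁻¹' Ioi (α z)) := by
    rwa [← (α.isOpenMap_of_ne_zero hα).preimage_closure_eq_closure_preimage α.continuous,
      closure_Ioi]
  exact hP.mem_of_frequently_of_tendsto
    ((mem_closure_iff_frequently.1 hclosure).and_eventually hx |>.mono fun y hy ↦ hy.2 hy.1)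
    tendsto_id

lemma eventually_apply_add_eq {α : V →L[ℝ] ℝ} (hα : α ≠ 0) {f : V → W} (hf : Continuous f)
    {Z : Set V} {c : W} {A : V →L[ℝ] W} (hA : ∀ x ∈ Z, f x = c + A x) {z : V}
    (h : ∀ᶠ x in 𝓝 z, α z < α x → x ∈ Z) :
    ∀ᶠ u in 𝓝 0, 0 ≤ α u → f (z + u) = f z + A u := by
  have hclosed : IsClosed {x | f x = c + A x} := isClosed_eq hf (by fun_prop)
  have hmem := eventually_mem_of_isClosed hα hclosed (h.mono fun x hx hzx ↦ hA x (hx hzx))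
  have htendsto : Tendsto (z + ·) (𝓝 0) (𝓝 z) := (continuous_const_add z).tendsto' 0 z (add_zero z)
  filter_upwards [htendsto.eventually hmem] with u hu hαu
  have hz : f z = c + A z := hmem.self_of_nhds le_rfl
  have hzu : f (z + u) = c + A (z + u) := hu (by simpa using hαu)
  rw [hzu, hz, map_add, add_assoc]

/-- The sets `Z` and `Z'` contain the two sides, near some common boundary point, of a hyperplane
parallel to the kernel of `α`. -/
def ShareFacet (α : V →L[ℝ] ℝ) (Z Z' : Set V) : Prop :=
  ∃ z, ∀ᶠ x in 𝓝 z, (α z < α x → x ∈ Z) ∧ (α x < α z → x ∈ Z')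

namespace ShareFacet

variable {α : V →L[ℝ] ℝ} {Z Z' : Set V} {f : V → W} {c c' : W} {A A' : V →L[ℝ] W}

lemma mono {Y Y' : Set V} (h : ShareFacet α Z Z') (hZ : Z ⊆ Y) (hZ' : Z' ⊆ Y') :
    ShareFacet α Y Y' := by
  obtain ⟨z, hz⟩ := h
  exact ⟨z, hz.mono fun x hx ↦ hx.imp (fun h hlt ↦ hZ (h hlt)) fun h hlt ↦ hZ' (h hlt)⟩

lemma exists_eventually_apply_add_eq (hZ : ShareFacet α Z Z') (hα : α ≠ 0) (hf : Continuous f)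
    (hA : ∀ x ∈ Z, f x = c + A x) (hA' : ∀ x ∈ Z', f x = c' + A' x) :
    ∃ z, (∀ᶠ u in 𝓝 0, 0 ≤ α u → f (z + u) = f z + A u) ∧
      ∀ᶠ u in 𝓝 0, α u ≤ 0 → f (z + u) = f z + A' u := by
  obtain ⟨z, hz⟩ := hZ
  have hbelow := eventually_apply_add_eq (neg_ne_zero.2 hα) hf hA'
    (hz.mono fun x hx hzx ↦ hx.2 (neg_lt_neg_iff.1 hzx))
  exact ⟨z, eventually_apply_add_eq hα hf hA (hz.mono fun _ hx ↦ hx.1),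
    hbelow.mono fun u hu hαu ↦ hu (neg_nonneg.2 hαu)⟩

lemma apply_eq_apply (hZ : ShareFacet α Z Z') (hα : α ≠ 0) (hf : Continuous f)
    (hA : ∀ x ∈ Z, f x = c + A x) (hA' : ∀ x ∈ Z', f x = c' + A' x) {u : V} (hu : α u = 0) :
    A u = A' u := by
  obtain ⟨z, habove, hbelow⟩ := hZ.exists_eventually_apply_add_eq hα hf hA hA'
  obtain ⟨ε, ⟨hA, hA'⟩, hε : 0 < ε⟩ := ((tendsto_smul_nhdsGT_zero u).eventually
    (habove.and hbelow) |>.and self_mem_nhdsWithin).exists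
  have hker : α (ε • u) = 0 := by rw [map_smul, hu, smul_zero]
  have heq : A (ε • u) = A' (ε • u) := add_left_cancel ((hA hker.ge).symm.trans (hA' hker.le))
  rw [map_smul, map_smul] at heq
  exact smul_right_injective W hε.ne' heq

end ShareFacet

end Facet

section FacetConnected

variable {ι V W : Type*} [NormedAddCommGroup V] [NormedSpace ℝ V]
  [NormedAddCommGroup W] [NormedSpace ℝ W]

/-- A continuous map which is `x ↦ c i + T i x` on the regime `Z i`, where the regimes are fat,
cover the space, and are linked by chains of regimes with a common facet. The regimes need be
neither convex nor disjoint. -/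
structure IsFacetConnectedAffine (f : V → W) (Z : ι → Set V) (c : ι → W) (T : ι → V →L[ℝ] W) :
    Prop where
  continuous : Continuous f
  exists_mem : ∀ x, ∃ i, x ∈ Z i
  apply_eq : ∀ i, ∀ x ∈ Z i, f x = c i + T i x
  interior_nonempty : ∀ i, (interior (Z i)).Nonempty
  connected : ∀ i j, Relation.EqvGen (fun i j ↦ ∃ α ≠ 0, ShareFacet α (Z i) (Z j)) i j

namespace IsFacetConnectedAffine

lemma isAffineSelection {f : V → W} {Z : ι → Set V} {c : ι → W} {T : ι → V →L[ℝ] W}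
    (hf : IsFacetConnectedAffine f Z c T) : IsAffineSelection f c T where
  continuous := hf.continuous
  exists_eq x := (hf.exists_mem x).imp fun i ↦ hf.apply_eq i x

variable [FiniteDimensional ℝ V] {f : V → V} {Z : ι → Set V} {c : ι → V} {T : ι → V →L[ℝ] V}

lemma det_mul_self_pos (hf : IsFacetConnectedAffine f Z c T) (hinj : Function.Injective f)
    (i : ι) : 0 < (T i).det * (T i).det := by
  obtain ⟨z, hz⟩ := hf.interior_nonempty i
  have htendsto : Tendsto (z + ·) (𝓝 0) (𝓝 z) := (continuous_const_add z).tendsto' 0 z (add_zero z)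
  have hlocal : ∀ᶠ u in 𝓝 0, f (z + u) = f z + T i u := by
    filter_upwards [htendsto.eventually (mem_interior_iff_mem_nhds.1 hz)] with u hu
    rw [hf.apply_eq i _ hu, hf.apply_eq i z (interior_subset hz), map_add, add_assoc]
  exact det_mul_det_pos_of_injective hinj (α := 0)
    (hlocal.mono fun _ hu _ ↦ hu) (hlocal.mono fun _ hu _ ↦ hu)

theorem det_mul_det_pos (hf : IsFacetConnectedAffine f Z c T) (hinj : Function.Injective f)
    (i j : ι) : 0 < (T i).det * (T j).det := by
  induction hf.connected i j with
  | rel i j hij =>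
    obtain ⟨α, hα, hfacet⟩ := hij
    obtain ⟨z, hi, hj⟩ := hfacet.exists_eventually_apply_add_eq hα hf.continuous
      (hf.apply_eq i) (hf.apply_eq j)
    exact det_mul_det_pos_of_injective hinj hi hj
  | refl i => exact hf.det_mul_self_pos hinj i
  | symm i j _ ih => rwa [mul_comm]
  | trans i j k _ _ hij hjk =>
    have : 0 < (T i).det * (T k).det * (T j).det ^ 2 := by
      calc 0 < (T i).det * (T j).det * ((T j).det * (T k).det) := mul_pos hij hjk
        _ = (T i).det * (T k).det * (T j).det ^ 2 := by ring
    exact pos_of_mul_pos_left this (sq_nonneg _)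

end IsFacetConnectedAffine

end FacetConnected

section Orthant

variable {ι κ V W : Type*} [NormedAddCommGroup V] [NormedSpace ℝ V]
  [NormedAddCommGroup W] [NormedSpace ℝ W]

/-- The cone of vectors whose nonnegative coordinates in the basis `b` are exactly those
indexed by `I`. -/
def orthant (b : Module.Basis κ ℝ V) (I : Set κ) : Set V :=
  {z | ∀ k, 0 ≤ b.repr z k ↔ k ∈ I}

variable [Finite κ] (b : Module.Basis κ ℝ V)

lemma exists_forall_repr_eq (s : κ → ℝ) : ∃ z, ∀ k, b.repr z k = s k :=
  ⟨b.repr.symm (Finsupp.equivFunOnFinite.symm s), fun k ↦ by simp⟩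

lemma mem_closure_orthant {I : Set κ} {x : V} (hI : ∀ k ∈ I, 0 ≤ b.repr x k)
    (hIc : ∀ k ∉ I, b.repr x k ≤ 0) : x ∈ closure (orthant b I) := by
  classical
  obtain ⟨p, hp⟩ := exists_forall_repr_eq b fun k ↦ if k ∈ I then 1 else -1
  have htendsto : Tendsto (fun ε : ℝ ↦ x + ε • p) (𝓝[>] 0) (𝓝 x) := by
    simpa using (tendsto_smul_nhdsGT_zero p).const_add x
  refine mem_closure_of_tendsto htendsto ?_
  filter_upwards [self_mem_nhdsWithin] with ε (hε : 0 < ε) k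
  have hrepr : b.repr (x + ε • p) k = b.repr x k + ε * if k ∈ I then 1 else -1 := by
    simp [hp]
  rw [hrepr]
  by_cases hk : k ∈ I
  · have := hI k hk
    simp only [hk, if_true, iff_true]
    positivity
  · have := hIc k hk
    simp only [hk, if_false, iff_false, not_le]
    linarith

lemma eventually_repr_nonneg_iff (z : V) :
    ∀ᶠ x in 𝓝 z, ∀ k, b.repr z k ≠ 0 → (0 ≤ b.repr x k ↔ 0 ≤ b.repr z k) := by
  have := b.finiteDimensional_of_finite
  refine eventually_all.2 fun k ↦ ?_
  have hcont : ContinuousAt (fun x ↦ b.repr x k) z :=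
    (b.coord k).continuous_of_finiteDimensional.continuousAt
  rcases lt_trichotomy (b.repr z k) 0 with hneg | hzero | hpos
  · filter_upwards [hcont.eventually_lt_const hneg] with x hx _
    exact iff_of_false hx.not_ge hneg.not_ge
  · exact Eventually.of_forall fun x hne ↦ absurd hzero hne
  · filter_upwards [hcont.eventually_const_lt hpos] with x hx _
    exact iff_of_true hx.le hpos.le

lemma interior_orthant_nonempty (I : Set κ) : (interior (orthant b I)).Nonempty := by
  classical
  obtain ⟨z, hz⟩ := exists_forall_repr_eq b fun k ↦ if k ∈ I then 1 else -1
  refine ⟨z, mem_interior_iff_mem_nhds.2 ?_⟩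
  filter_upwards [eventually_repr_nonneg_iff b z] with x hx k
  have hne : b.repr z k ≠ 0 := by
    rw [hz]
    split_ifs <;> norm_num
  rw [hx k hne, hz]
  split_ifs with hk <;> simp [hk]

lemma exists_shareFacet_orthant_insert {I : Set κ} {k : κ} (hk : k ∉ I) :
    ∃ α ≠ 0, ShareFacet α (orthant b (insert k I)) (orthant b I) := by
  classical
  have := b.finiteDimensional_of_finite
  set α : V →L[ℝ] ℝ := (b.coord k).toContinuousLinearMap
  have hα (x : V) : α x = b.repr x k := rfl
  obtain ⟨z, hz⟩ :=
    exists_forall_repr_eq b fun j ↦ if j = k then 0 else if j ∈ I then 1 else -1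
  have hzk : α z = 0 := by simp [hα, hz]
  have hother (x : V) (hx : ∀ j, b.repr z j ≠ 0 → (0 ≤ b.repr x j ↔ 0 ≤ b.repr z j)) {j : κ}
      (hj : j ≠ k) : 0 ≤ b.repr x j ↔ j ∈ I := by
    have hzj : b.repr z j = if j ∈ I then 1 else -1 := by rw [hz, if_neg hj]
    rw [hx j (by rw [hzj]; split_ifs <;> norm_num), hzj]
    split_ifs with hjI <;> simp [hjI]
  refine ⟨α, fun h ↦ one_ne_zero (α := ℝ) ?_, z, ?_⟩
  · simpa [hα] using congrArg (· (b k)) h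
  filter_upwards [eventually_repr_nonneg_iff b z] with x hx
  rw [hzk, hα]
  refine ⟨fun hpos j ↦ ?_, fun hneg j ↦ ?_⟩
  · rcases eq_or_ne j k with rfl | hj
    · simp [hpos.le]
    · simp [hother x hx hj, hj]
  · rcases eq_or_ne j k with rfl | hj
    · simp [hneg, hk]
    · exact hother x hx hj

variable {f : V → W} {Z : ι → Set V} {c : ι → W} {T : ι → V →L[ℝ] W} {g : Set κ → ι}

theorem isFacetConnectedAffine_of_orthant_subset (hf : Continuous f)
    (hT : ∀ i, ∀ x ∈ Z i, f x = c i + T i x) (hg : Function.Surjective g)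
    (hsub : ∀ I, orthant b I ⊆ Z (g I)) : IsFacetConnectedAffine f Z c T where
  continuous := hf
  exists_mem x := ⟨g {k | 0 ≤ b.repr x k}, hsub _ fun _ ↦ Iff.rfl⟩
  apply_eq := hT
  interior_nonempty i := by
    obtain ⟨I, rfl⟩ := hg i
    exact (interior_orthant_nonempty b I).mono (interior_mono (hsub I))
  connected i j := by
    have hempty (I : Set κ) : Relation.EqvGen
        (fun i j ↦ ∃ α ≠ 0, ShareFacet α (Z i) (Z j)) (g I) (g ∅) := by
      induction I, I.toFinite using Set.Finite.induction_on with
      | empty => exact .refl _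
      | insert hk _ ih =>
        obtain ⟨α, hα, hfacet⟩ := exists_shareFacet_orthant_insert b hk
        exact .trans _ _ _ (.rel _ _ ⟨α, hα, hfacet.mono (hsub _) (hsub _)⟩) ih
    obtain ⟨I, rfl⟩ := hg i
    obtain ⟨J, rfl⟩ := hg j
    exact .trans _ _ _ (hempty I) (.symm _ _ (hempty J))

lemma apply_basis_eq_of_orthant_subset (hf : Continuous f) {A : V →L[ℝ] W} {I : Set κ}
    (hA : ∀ x ∈ orthant b I, f x = A x) (k : κ) [Decidable (k ∈ I)] :
    A (b k) = if k ∈ I then f (b k) else -f (-b k) := by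
  classical
  have hclosure : closure (orthant b I) ⊆ {x | f x = A x} :=
    closure_minimal hA (isClosed_eq hf A.continuous)
  have hrepr (j : κ) : b.repr (b k) j = if k = j then 1 else 0 := b.repr_self_apply k j
  have hnonneg (j : κ) : 0 ≤ b.repr (b k) j := by
    rw [hrepr]
    split_ifs <;> norm_num
  have hzero {j : κ} (hj : k ≠ j) : b.repr (b k) j = 0 := by rw [hrepr, if_neg hj]
  split_ifs with hk
  · exact (hclosure (mem_closure_orthant b (fun j _ ↦ hnonneg j)
      fun j hj ↦ (hzero (ne_of_mem_of_not_mem hk hj)).le)).symm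
  · have hneg : f (-b k) = A (-b k) := hclosure <| mem_closure_orthant b
      (fun j hj ↦ by
        rw [map_neg, Finsupp.neg_apply, hzero (ne_of_mem_of_not_mem hj hk).symm, neg_zero])
      fun j _ ↦ by simpa using hnonneg j
    rw [hneg, map_neg, neg_neg]

theorem isColumnwiseClosed_of_orthant_subset {n : ℕ} (b : Module.Basis (Fin n) ℝ V) {f : V → V}
    {T : ι → V →L[ℝ] V} {g : Set (Fin n) → ι} (hf : Continuous f)
    (hT : ∀ i, ∀ x ∈ Z i, f x = T i x) (hg : Function.Surjective g)
    (hsub : ∀ I, orthant b I ⊆ Z (g I)) : IsColumnwiseClosed T := by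
  classical
  have hcolumn (I : Set (Fin n)) (k : Fin n) :
      T (g I) (b k) = if k ∈ I then f (b k) else -f (-b k) :=
    apply_basis_eq_of_orthant_subset b hf (fun x hx ↦ hT _ x (hsub I hx)) k
  refine ⟨n, b, fun σ ↦ ?_⟩
  choose J hJ using fun k ↦ hg (σ k)
  refine ⟨g {k | k ∈ J k}, fun k ↦ ?_⟩
  rw [← hJ k, hcolumn, hcolumn]
  rfl

end Orthant

lemma exists_basis_repr_eq_inner {κ V : Type*} [Finite κ] [NormedAddCommGroup V]
    [InnerProductSpace ℝ V] (a : Module.Basis κ ℝ V) :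
    ∃ b : Module.Basis κ ℝ V, ∀ z k, b.repr z k = inner ℝ (a k) z := by
  have := Fintype.ofFinite κ
  have := a.finiteDimensional_of_finite
  set e : V →ₗ[ℝ] κ → ℝ := LinearMap.pi fun k ↦ innerₛₗ ℝ (a k)
  have hinj : Function.Injective e := fun x y hxy ↦
    InnerProductSpace.ext_inner_left_basis a (congrFun hxy)
  have hdim : Module.finrank ℝ V = Module.finrank ℝ (κ → ℝ) := by
    rw [Module.finrank_eq_card_basis a, Module.finrank_fintype_fun_eq_card]
  exact ⟨.ofEquivFun (LinearMap.linearEquivOfInjective e hinj hdim), fun z k ↦ rfl⟩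

section Threshold

variable {ι V : Type*} [NormedAddCommGroup V] [NormedSpace ℝ V] {α : V →L[ℝ] ℝ}

lemma surjective_of_ne_zero (hα : α ≠ 0) : Function.Surjective α :=
  LinearMap.surjective_of_ne_zero fun h ↦ hα (ContinuousLinearMap.coe_injective h)

theorem isColumnwiseClosed_of_eqOn_ker [FiniteDimensional ℝ V] (hα : α ≠ 0) {T : ι → V →L[ℝ] V}
    (hT : ∀ i j u, α u = 0 → T i u = T j u) : IsColumnwiseClosed T := by
  obtain ⟨e, he⟩ : ∃ e, α e ≠ 0 := DFunLike.ne_iff.1 hα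
  have hindep : ∀ c : ℝ, ∀ x ∈ α.ker, c • e + x = 0 → c = 0 := by
    intro c x hx hcx
    have hαx : α x = 0 := hx
    simpa [hαx, he] using congrArg α hcx
  have hspan : ∀ z : V, ∃ c : ℝ, z + c • e ∈ α.ker := fun z ↦ ⟨-(α z / α e), by simp [he]⟩
  refine ⟨_, .mkFinCons e (Module.finBasis ℝ α.ker) hindep hspan, fun σ ↦ ⟨σ 0, fun k ↦ ?_⟩⟩
  cases k using Fin.cases with
  | zero => rfl
  | succ k =>
    refine hT _ _ _ ?_
    rw [Module.Basis.coe_mkFinCons, Fin.cons_succ]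
    exact (Module.finBasis ℝ α.ker k).2

/-- The band of vectors at which the functional `α` exceeds the threshold `s` but not `t`. -/
def band (α : V →L[ℝ] ℝ) (s t : EReal) : Set V :=
  {z | s < (α z : EReal) ∧ (α z : EReal) ≤ t}

lemma continuous_coe_apply (α : V →L[ℝ] ℝ) : Continuous fun x ↦ (α x : EReal) :=
  continuous_coe_real_ereal.comp α.continuous

lemma interior_band_nonempty (hα : α ≠ 0) {s t : EReal} (hst : s < t) :
    (interior (band α s t)).Nonempty := by
  obtain ⟨r, hsr, hrt⟩ := EReal.lt_iff_exists_real_btwn.1 hst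
  obtain ⟨z, rfl⟩ := surjective_of_ne_zero hα r
  have hcont := (continuous_coe_apply α).continuousAt (x := z)
  refine ⟨z, mem_interior_iff_mem_nhds.2 ?_⟩
  filter_upwards [hcont.eventually_const_lt hsr, hcont.eventually_lt_const hrt] with x hsx hxt
  exact ⟨hsx, hxt.le⟩

lemma shareFacet_band (hα : α ≠ 0) {r s t : EReal} (hrs : r < s) (hst : s < t) :
    ShareFacet α (band α s t) (band α r s) := by
  lift s to ℝ using ⟨hst.ne_top, hrs.ne_bot⟩
  obtain ⟨z, rfl⟩ := surjective_of_ne_zero hα s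
  have hcont := (continuous_coe_apply α).continuousAt (x := z)
  refine ⟨z, ?_⟩
  filter_upwards [hcont.eventually_const_lt hrs, hcont.eventually_lt_const hst] with x hrx hxt
  exact ⟨fun h ↦ ⟨EReal.coe_lt_coe_iff.2 h, hxt.le⟩, fun h ↦ ⟨hrx, (EReal.coe_lt_coe_iff.2 h).le⟩⟩

lemma eqvGen_shareFacet_band (hα : α ≠ 0) {L : ℕ} {τ : Fin (L + 1) → EReal} (hτ : StrictMono τ)
    (i j : Fin L) : Relation.EqvGen (fun i j : Fin L ↦
      ShareFacet α (band α (τ i.castSucc) (τ i.succ)) (band α (τ j.castSucc) (τ j.succ))) i j := by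
  obtain _ | n := L
  · exact i.elim0
  have hzero (i : Fin (n + 1)) : Relation.EqvGen (fun i j : Fin (n + 1) ↦
      ShareFacet α (band α (τ i.castSucc) (τ i.succ)) (band α (τ j.castSucc) (τ j.succ))) i 0 := by
    induction i using Fin.induction with
    | zero => exact .refl _
    | succ i ih =>
      refine .trans _ _ _ (.rel _ _ ?_) ih
      exact shareFacet_band hα (hτ i.castSucc.castSucc_lt_succ) (hτ i.succ.castSucc_lt_succ)
  exact .trans _ _ _ (hzero i) (.symm _ _ (hzero j))

end Threshold

section EuclideanSpace

lemma inner_eq_sum_mul {n : ℕ} (a z : E n) : inner ℝ a z = ∑ j, a j * z j := by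
  simp only [PiLp.inner_apply, RCLike.inner_apply, conj_trivial, mul_comm]

lemma det_toEuclideanCLM {n : ℕ} (A : Matrix (Fin n) (Fin n) ℝ) :
    (toEuclideanCLM (𝕜 := ℝ) A).det = A.det :=
  LinearMap.det_toLpLin 2 A

variable {p L : ℕ} {f : E p → E p} {Z : Fin L → Set (E p)} {φ : Fin L → E p}
  {Φ : Fin L → Matrix (Fin p) (Fin p) ℝ}

lemma IsPiecewiseAffine.apply_eq (hf : IsPiecewiseAffine f Z φ Φ)
    (ℓ : Fin L) {z : E p} (hz : z ∈ Z ℓ) : f z = φ ℓ + toEuclideanCLM (𝕜 := ℝ) (Φ ℓ) z :=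
  hf.2.2.2.2 ℓ z hz

namespace IsPiecewiseLinear

lemma exists_orthant_subset (hf : IsPiecewiseLinear f Z φ Φ) :
    ∃ (b : Module.Basis (Fin p) ℝ (E p)) (g : Set (Fin p) → Fin L),
      Function.Surjective g ∧ ∀ I, orthant b I ⊆ Z (g I) := by
  obtain ⟨⟨-, -, hne, hpart, -⟩, -, a, hli, hspan, hZ⟩ := hf
  choose S hS using hZ
  obtain ⟨b, hb⟩ := exists_basis_repr_eq_inner (Module.Basis.mk hli hspan.ge)
  have hcone (I : Set (Fin p)) : coneOf a I = orthant b I := by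
    ext z
    simp only [coneOf, orthant, mem_ofPred_eq, hb, Module.Basis.mk_apply, inner_eq_sum_mul]
    refine ⟨fun h k ↦ ⟨fun hk ↦ ?_, h.1 k⟩, fun h ↦ ⟨fun k ↦ (h k).2, fun k hk ↦ ?_⟩⟩
    · by_contra hkI
      exact (h.2 k hkI).not_ge hk
    · exact not_le.1 (hk ∘ (h k).1)
  have hregime {ℓ : Fin L} {z : E p} {I : Set (Fin p)} (hz : z ∈ Z ℓ) (hzI : z ∈ orthant b I) :
      orthant b I ⊆ Z ℓ := by
    simp only [hS, hcone, mem_iUnion] at hz ⊢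
    obtain ⟨J, hJ, hzJ⟩ := hz
    obtain rfl : I = J := ext fun k ↦ (hzI k).symm.trans (hzJ k)
    exact subset_biUnion_of_mem (u := orthant b) hJ
  have hmeet (I : Set (Fin p)) : ∃ ℓ, orthant b I ⊆ Z ℓ := by
    obtain ⟨z, hz⟩ := (interior_orthant_nonempty b I).mono interior_subset
    obtain ⟨ℓ, hℓ, -⟩ := hpart z
    exact ⟨ℓ, hregime hℓ hz⟩
  choose g hg using hmeet
  refine ⟨b, g, fun ℓ ↦ ?_, hg⟩
  obtain ⟨z, hz⟩ := hne ℓ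
  exact ⟨_, (hpart z).unique (hg {k | 0 ≤ b.repr z k} fun k ↦ Iff.rfl) hz⟩

lemma isFacetConnectedAffine (hf : IsPiecewiseLinear f Z φ Φ) :
    IsFacetConnectedAffine f Z φ fun ℓ ↦ toEuclideanCLM (𝕜 := ℝ) (Φ ℓ) := by
  obtain ⟨b, g, hg, hsub⟩ := hf.exists_orthant_subset
  exact isFacetConnectedAffine_of_orthant_subset b hf.1.1 (fun _ _ ↦ hf.1.apply_eq _) hg hsub

lemma isColumnwiseClosed (hf : IsPiecewiseLinear f Z φ Φ) :
    IsColumnwiseClosed fun ℓ ↦ toEuclideanCLM (𝕜 := ℝ) (Φ ℓ) := by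
  obtain ⟨b, g, hg, hsub⟩ := hf.exists_orthant_subset
  refine isColumnwiseClosed_of_orthant_subset b hf.1.1 (fun ℓ z hz ↦ ?_) hg hsub
  rw [hf.1.apply_eq ℓ hz, hf.2.1, zero_add]

end IsPiecewiseLinear

namespace IsThresholdAffine

lemma exists_eq_band (hf : IsThresholdAffine f Z φ Φ) :
    ∃ α : E p →L[ℝ] ℝ, α ≠ 0 ∧ ∃ τ : Fin (L + 1) → EReal, StrictMono τ ∧
      ∀ ℓ, Z ℓ = band α (τ ℓ.castSucc) (τ ℓ.succ) := by
  obtain ⟨-, a, ha, τ, hτ, -, -, hZ⟩ := hf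
  refine ⟨innerSL ℝ a, fun h ↦ ha ?_, τ, hτ, fun ℓ ↦ ?_⟩
  · simpa using congrArg (· a) h
  · simp only [hZ, band, innerSL_apply_apply, inner_eq_sum_mul]

lemma isFacetConnectedAffine (hf : IsThresholdAffine f Z φ Φ) :
    IsFacetConnectedAffine f Z φ fun ℓ ↦ toEuclideanCLM (𝕜 := ℝ) (Φ ℓ) := by
  obtain ⟨α, hα, τ, hτ, hZ⟩ := hf.exists_eq_band
  exact {
    continuous := hf.1.1
    exists_mem := fun z ↦ (hf.1.2.2.2.1 z).exists
    apply_eq := fun _ _ ↦ hf.1.apply_eq _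
    interior_nonempty := fun ℓ ↦ hZ ℓ ▸ interior_band_nonempty hα (hτ ℓ.castSucc_lt_succ)
    connected := fun ℓ m ↦ Relation.EqvGen.mono
      (fun i j hij ↦ ⟨α, hα, by rwa [hZ, hZ]⟩) _ _ (eqvGen_shareFacet_band hα hτ ℓ m) }

lemma isColumnwiseClosed (hf : IsThresholdAffine f Z φ Φ) :
    IsColumnwiseClosed fun ℓ ↦ toEuclideanCLM (𝕜 := ℝ) (Φ ℓ) := by
  obtain ⟨α, hα, τ, hτ, hZ⟩ := hf.exists_eq_band
  refine isColumnwiseClosed_of_eqOn_ker hα fun ℓ m u hu ↦ ?_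
  induction eqvGen_shareFacet_band hα hτ ℓ m with
  | rel i j hij =>
    rw [← hZ, ← hZ] at hij
    exact hij.apply_eq_apply hα hf.1.1 (fun _ ↦ hf.1.apply_eq i) (fun _ ↦ hf.1.apply_eq j) hu
  | refl => rfl
  | symm _ _ _ ih => exact ih.symm
  | trans _ _ _ _ _ ih ih' => exact ih.trans ih'

end IsThresholdAffine

end EuclideanSpace

theorem piecewise_affine_invertibility_general {ι V : Type*} [Finite ι] [NormedAddCommGroup V]
    [InnerProductSpace ℝ V] [FiniteDimensional ℝ V] {f : V → V} {Z : ι → Set V} {c : ι → V}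
    {T : ι → V →L[ℝ] V} (hf : IsFacetConnectedAffine f Z c T) (hT : IsColumnwiseClosed T)
    (i₀ : ι) :
    (Function.Bijective f ∧ (∃ C : NNReal, LipschitzWith C f) ∧
        (∃ C : NNReal, LipschitzWith C (Function.invFun f)))
      ↔ ∀ i, 0 < (T i).det * (T i₀).det := by
  refine ⟨fun h i ↦ hf.det_mul_det_pos h.1.injective i i₀, fun hdet ↦ ?_⟩
  refine hf.isAffineSelection.bijective_and_lipschitz fun M hM ↦ isUnit_of_det_ne_zero ?_
  exact left_ne_zero_of_mul (hT.det_mul_pos hdet hM).ne'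

/-- **Invertibility of piecewise linear / threshold affine maps** (Proposition
`prop:pwacondition` (1)): `f` is a bi-Lipschitz bijection if and only if the determinants
of the regime matrices are nonzero and share a common sign. -/
theorem piecewise_affine_invertibility
    (p L : ℕ) (hp : 1 ≤ p) (hL : 1 ≤ L)
    (f : E p → E p) (Z : Fin L → Set (E p)) (φ : Fin L → E p)
    (Φ : Fin L → Matrix (Fin p) (Fin p) ℝ)
    (hf : IsPiecewiseLinear f Z φ Φ ∨ IsThresholdAffine f Z φ Φ) :
    (Function.Bijective f ∧ (∃ C : NNReal, LipschitzWith C f) ∧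
        (∃ C : NNReal, LipschitzWith C (Function.invFun f)))
      ↔ ∀ ℓ : Fin L, 0 < (Φ ℓ).det * (Φ ⟨0, hL⟩).det := by
  have hfacet : IsFacetConnectedAffine f Z φ fun ℓ ↦ toEuclideanCLM (𝕜 := ℝ) (Φ ℓ) :=
    hf.elim (·.isFacetConnectedAffine) (·.isFacetConnectedAffine)
  have hcolumn : IsColumnwiseClosed fun ℓ ↦ toEuclideanCLM (𝕜 := ℝ) (Φ ℓ) :=
    hf.elim (·.isColumnwiseClosed) (·.isColumnwiseClosed)
  simpa only [det_toEuclideanCLM] using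
    piecewise_affine_invertibility_general hfacet hcolumn ⟨0, hL⟩
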